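/- Let ℓ ≡ 3 (mod 8) be a prime power of the form ℓ = (c²/2) + 1 for some integer c, and let q = ℓ². Then, in F_q, the set D = C_3^8 ∪ C_5^8 is a skew PDS corresponding to the (q,(q−1)/4,(q−11+6ℓ)/16,(q−3−2ℓ)/16)-PDS C_0^4. -/

import Mathlib

open Finset

section Defs

variable {G : Type*} [AddCommGroup G] [Fintype G] [DecidableEq G]

/-- The multiset `Δ(D)` of internal differences `x - y` (for `x ≠ y` in `D`). -/
def intDiff (D : Finset G) : Multiset G :=
  ((D ×ˢ D).filter (fun p => p.1 ≠ p.2)).val.map (fun p => p.1 - p.2)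

/-- The multiset `Δ(D, E)` of external differences `x - y` for `x ∈ D`, `y ∈ E`. -/
def extDiff (D E : Finset G) : Multiset G :=
  (D ×ˢ E).val.map (fun p => p.1 - p.2)

/-- The finset `G^*` of nonzero elements of `G`. -/
def Gstar (G : Type*) [AddCommGroup G] [Fintype G] [DecidableEq G] : Finset G :=
  Finset.univ.erase 0

/-- `A` is a `(v, k, lam, mu)` partial difference set in `G`:
`Δ(A) = lam • A^* + mu • (G^* \ A)`. -/
def IsPDS (A : Finset G) (v k lam mu : ℕ) : Prop :=
  Fintype.card G = v ∧ A.card = k ∧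
    intDiff A = lam • (A.erase 0).val + mu • (Gstar G \ A).val

/-- `D` is a `(v, k, lam, mu)` skew partial difference set corresponding to the
`(v, k, lam, mu)`-PDS `A`: `Δ(D) = lam • A^* + mu • (G^* \ A)`. -/
def IsSkewPDS (D A : Finset G) (v k lam mu : ℕ) : Prop :=
  IsPDS A v k lam mu ∧ D.card = k ∧
    intDiff D = lam • (A.erase 0).val + mu • (Gstar G \ A).val

/-- `D` is an `(n, m, k₁, …, k_m; lam, mu)` disjoint partial difference family relative
to `T`: the `D i` are pairwise disjoint subsets of `G^*` of sizes `k i`, and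
`∑ i, Δ(D i) = lam • T + mu • (G^* \ T)`. -/
def IsDPDF {ι : Type*} [Fintype ι] (D : ι → Finset G) (n m : ℕ) (k : ι → ℕ)
    (T : Finset G) (lam mu : ℕ) : Prop :=
  Fintype.card G = n ∧ Fintype.card ι = m ∧
    (∀ i, (0 : G) ∉ D i) ∧ (∀ i, (D i).card = k i) ∧
    (Pairwise (fun i j => Disjoint (D i) (D j))) ∧
    ∑ i, intDiff (D i) = lam • T.val + mu • (Gstar G \ T).val

/-- `D` is an `(n, m, k₁, …, k_m; lam, mu)` external partial difference family relative
to `T`: the `D i` are pairwise disjoint subsets of `G^*` of sizes `k i`, and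
`∑_{i ≠ j}, Δ(D i, D j) = lam • T + mu • (G^* \ T)`. -/
def IsEPDF {ι : Type*} [Fintype ι] [DecidableEq ι] (D : ι → Finset G) (n m : ℕ)
    (k : ι → ℕ) (T : Finset G) (lam mu : ℕ) : Prop :=
  Fintype.card G = n ∧ Fintype.card ι = m ∧
    (∀ i, (0 : G) ∉ D i) ∧ (∀ i, (D i).card = k i) ∧
    (Pairwise (fun i j => Disjoint (D i) (D j))) ∧
    ∑ i, ∑ j ∈ Finset.univ.erase i, extDiff (D i) (D j)
      = lam • T.val + mu • (Gstar G \ T).val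

/-- `D` is an `(n, m, k₁, …, k_m, lam)` disjoint difference family:
`∑ i, Δ(D i) = lam • G^*`. -/
def IsDDF {ι : Type*} [Fintype ι] (D : ι → Finset G) (n m : ℕ) (k : ι → ℕ)
    (lam : ℕ) : Prop :=
  Fintype.card G = n ∧ Fintype.card ι = m ∧
    (∀ i, (0 : G) ∉ D i) ∧ (∀ i, (D i).card = k i) ∧
    (Pairwise (fun i j => Disjoint (D i) (D j))) ∧
    ∑ i, intDiff (D i) = lam • (Gstar G).val

/-- `D` is an `(n, m, k₁, …, k_m, lam)` external difference family:
`∑_{i ≠ j}, Δ(D i, D j) = lam • G^*`. -/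
def IsEDF {ι : Type*} [Fintype ι] [DecidableEq ι] (D : ι → Finset G) (n m : ℕ)
    (k : ι → ℕ) (lam : ℕ) : Prop :=
  Fintype.card G = n ∧ Fintype.card ι = m ∧
    (∀ i, (0 : G) ∉ D i) ∧ (∀ i, (D i).card = k i) ∧
    (Pairwise (fun i j => Disjoint (D i) (D j))) ∧
    ∑ i, ∑ j ∈ Finset.univ.erase i, extDiff (D i) (D j) = lam • (Gstar G).val

end Defs

section Cyclotomy

variable {F : Type*} [Field F] [Fintype F] [DecidableEq F]

/-- The cyclotomic class `C_i^e = α^i ⟨α^e⟩` of order `e` in the finite field `F`,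
with respect to the primitive element `α`.  (Since `α` has multiplicative order at most
`|F| - 1`, letting `j` range over `0, …, |F| - 1` captures the whole class.) -/
def cycClass (α : F) (e i : ℕ) : Finset F :=
  (Finset.range (Fintype.card F)).image (fun j => α ^ (e * j + i))

/-- `α` is a primitive element of the finite field `F`: every nonzero element of `F`
is a power of `α`. -/
def IsPrimitiveElt (α : F) : Prop :=
  ∀ x : F, x ≠ 0 → ∃ n : ℕ, α ^ n = x

end Cyclotomy

lemma aux_choose (p : ℕ) (hp : p.Prime) (j : ℕ) (hpj : p = 8 * j + 3) (t : ℕ) :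
    ∀ k : ℕ, p ^ (2 * t + 1) = 8 * k + 3 → ¬ p ∣ (4 * k + 1).choose k := by
  have := Fact.mk hp
  have small : ∀ a b : ℕ, a < p → b ≤ a → ¬ p ∣ a.choose b := by
    intro a b ha hb hd
    have h1 := Nat.choose_mul_factorial_mul_factorial hb
    have h2 : p ∣ a.factorial := by
      rw [← h1, mul_assoc]
      exact Dvd.dvd.mul_right hd _
    rw [hp.dvd_factorial] at h2
    omega
  induction t with
  | zero =>
    intro k hk
    apply small <;> simp at hk <;> omega
  | succ t ih =>
    intro k hk
    obtain ⟨k', hk'⟩ : ∃ k', p ^ (2 * t + 1) = 8 * k' + 3 := by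
      have : p ^ (2 * t + 1) % 8 = 3 := by
        rw [pow_succ, pow_mul, Nat.mul_mod, Nat.pow_mod, Nat.pow_mod p 2]
        have : p % 8 = 3 := by omega
        simp [this]
      exact ⟨p ^ (2 * t + 1) / 8, by omega⟩
    have e : p ^ (2 * (t + 1) + 1) = p ^ (2 * t + 1) * (p * p) := by ring
    rw [e, hk'] at hk
    have hk2 : k = p * (p * k' + (3 * j + 1)) + j := by
      have : 8 * k + 3 = 8 * (p * (p * k' + (3 * j + 1)) + j) + 3 := by
        rw [← hk, hpj]; ring
      omega
    have hm2 : 4 * k + 1 = p * (p * (4 * k' + 1) + (4 * j + 1)) + (4 * j + 1) := by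
      rw [hk2, hpj]; ring
    have step : ∀ a b c d : ℕ, c < p → d ≤ c → ¬ p ∣ a.choose b →
        ¬ p ∣ (p * a + c).choose (p * b + d) := by
      intro a b c d hc hd hab hdiv
      have h := Choose.choose_modEq_choose_mod_mul_choose_div_nat (n := p * a + c)
        (k := p * b + d) (p := p)
      have hd' : d < p := by omega
      rw [Nat.mul_add_mod, Nat.mul_add_mod, Nat.mod_eq_of_lt hc, Nat.mod_eq_of_lt hd',
        Nat.mul_add_div hp.pos, Nat.mul_add_div hp.pos, Nat.div_eq_of_lt hc,
        Nat.div_eq_of_lt hd', add_zero, add_zero] at h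
      have h3 := (Nat.ModEq.dvd_iff h (dvd_refl p)).1 hdiv
      rcases hp.dvd_mul.1 h3 with h4 | h4
      · exact small _ _ hc hd h4
      · exact hab h4
    rw [hm2]
    conv => rw [hk2]
    apply step _ _ _ _ (by omega) (by omega)
    apply step _ _ _ _ (by omega) (by omega)
    exact ih k' hk'

lemma aux_unique (p n : ℕ) (hp : p.Prime) (hp2 : p ≠ 2) (l : ℤ) (hl : l = (p : ℤ) ^ n) (hn : n ≠ 0) (hl0 : 0 < l)
    (w s y : ℤ) (h1 : 1 + 2 * w ^ 2 = l) (h2 : s ^ 2 + 2 * y ^ 2 = l) (hs : ¬ (p : ℤ) ∣ s) :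
    s ^ 2 = 1 := by
  have hpp : Prime (p : ℤ) := Nat.prime_iff_prime_int.1 hp
  have hpl : (p : ℤ) ∣ l := by rw [hl]; exact dvd_pow_self _ hn
  have hpw : ¬ (p : ℤ) ∣ w := by
    intro h
    have : (p : ℤ) ∣ 1 := by
      have e : (1 : ℤ) = l - 2 * w * w := by rw [← h1]; ring
      rw [e]
      exact dvd_sub hpl (Dvd.dvd.mul_left h _)
    exact hpp.not_isUnit (isUnit_of_dvd_one this)
  have hp2' : ¬ (p : ℤ) ∣ 2 := by
    intro h
    have : p ∣ 2 := by exact_mod_cast h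
    exact hp2 ((Nat.prime_dvd_prime_iff_eq hp Nat.prime_two).1 this)
  have hcop2 : IsCoprime l 2 := by
    rw [hl]; exact IsCoprime.pow_left ((Prime.coprime_iff_not_dvd hpp).2 hp2')
  have hprod : l ∣ (s * w - y) * (s * w + y) := by
    apply hcop2.dvd_of_dvd_mul_left
    refine ⟨s ^ 2 - 1, ?_⟩
    linear_combination s ^ 2 * h1 - h2
  have key : ∀ y' : ℤ, s ^ 2 + 2 * y' ^ 2 = l → l ∣ s * w - y' → s ^ 2 = 1 := by
    intro y' hy' ⟨r, hr⟩
    have e : (s + 2 * w * y') ^ 2 + 2 * (s * w - y') ^ 2 = l ^ 2 := by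
      linear_combination (1 + 2 * w ^ 2) * hy' + l * h1
    rw [hr] at e
    have hr0 : r = 0 := by
      by_contra h
      have : 1 ≤ r ^ 2 := by
        have : 0 < r ^ 2 := by positivity
        omega
      nlinarith [sq_nonneg (s + 2 * w * y')]
    rw [hr0, mul_zero] at hr
    have e3 : s ^ 2 * l = l := by
      have : y' = s * w := by linarith
      rw [this] at hy'
      linear_combination hy' - s ^ 2 * h1
    nlinarith [mul_right_cancel₀ hl0.ne' (e3.trans (one_mul l).symm)]
  by_cases hA : (p : ℤ) ∣ s * w - y
  · have hB : ¬ (p : ℤ) ∣ s * w + y := by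
      intro hB
      have : (p : ℤ) ∣ 2 * (s * w) := by
        have := dvd_add hA hB
        ring_nf at this ⊢
        exact this
      rcases hpp.dvd_or_dvd this with h | h
      · exact hp2' h
      · rcases hpp.dvd_or_dvd h with h | h
        · exact hs h
        · exact hpw h
    have : IsCoprime l (s * w + y) := by
      rw [hl]; exact IsCoprime.pow_left ((Prime.coprime_iff_not_dvd hpp).2 hB)
    exact key y h2 (this.dvd_of_dvd_mul_right hprod)
  · have : IsCoprime l (s * w - y) := by
      rw [hl]; exact IsCoprime.pow_left ((Prime.coprime_iff_not_dvd hpp).2 hA)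
    refine key (-y) (by linarith [neg_sq y]) ?_
    rw [sub_neg_eq_add]
    exact this.dvd_of_dvd_mul_left hprod

structure Ctx (F : Type*) [Field F] [Fintype F] [DecidableEq F] (p n k l m M : ℕ) (α : F) :
    Prop where
  hl : l = 8 * k + 3
  hm : m = 4 * k + 1
  hM : M = 2 * k + 1
  hp : p.Prime
  hln : l = p ^ n
  hchar : CharP F p
  card : Fintype.card F = l ^ 2
  prim : IsPrimitiveRoot α (8 * (m * M))
  gen : ∀ x : F, x ≠ 0 → ∃ r : ℕ, α ^ r = x

section Main

set_option linter.unusedSectionVars false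

variable {F : Type*} [Field F] [Fintype F] [DecidableEq F] {p n k l m M : ℕ} {α : F}

/-- roots of unity as a finset -/
def Rt (F : Type*) [Field F] [Fintype F] [DecidableEq F] (r : ℕ) : Finset F :=
  univ.filter (fun x => x ^ r = 1)

lemma mem_Rt {r : ℕ} {x : F} : x ∈ Rt F r ↔ x ^ r = 1 := by simp [Rt]

/-- The alternating form. -/
def zf (l : ℕ) (x y : F) : F := x ^ l * y - x * y ^ l

/-- Its sign. -/
def ff (l m : ℕ) (i : F) (x y : F) : ℤ :=
  if zf l x y = 0 then 0 else if zf l x y ^ m = i then 1 else -1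

namespace Ctx


lemma mpos (h : Ctx F p n k l m M α) : 0 < m := by have := h.hm; omega
lemma Mpos (h : Ctx F p n k l m M α) : 0 < M := by have := h.hM; omega
lemma lpos (h : Ctx F p n k l m M α) : 0 < l := by have := h.hl; omega
lemma l_eq (h : Ctx F p n k l m M α) : l = 2 * m + 1 := by have := h.hm; have := h.hl; omega
lemma m_eq (h : Ctx F p n k l m M α) : m + 1 = 2 * M := by have := h.hm; have := h.hM; omega
lemma modd (h : Ctx F p n k l m M α) : Odd m := ⟨2 * k, by have := h.hm; omega⟩
lemma Modd (h : Ctx F p n k l m M α) : Odd M := ⟨k, by have := h.hM; omega⟩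

lemma card_sub (h : Ctx F p n k l m M α) : l ^ 2 - 1 = 8 * (m * M) := by
  rw [h.hl, h.hm, h.hM]
  have : (8 * k + 3) ^ 2 = 8 * ((4 * k + 1) * (2 * k + 1)) + 1 := by ring
  omega

lemma add_pow (h : Ctx F p n k l m M α) (x y : F) : (x + y) ^ l = x ^ l + y ^ l := by
  have := h.hchar
  have := Fact.mk h.hp
  rw [h.hln]
  exact add_pow_char_pow x y p n

lemma sub_pow (h : Ctx F p n k l m M α) (x y : F) : (x - y) ^ l = x ^ l - y ^ l := by
  have := h.hchar
  have := Fact.mk h.hp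
  rw [h.hln]
  exact sub_pow_char_pow x y n

lemma lodd (h : Ctx F p n k l m M α) : Odd l := ⟨m, h.l_eq⟩

lemma pow_ll (h : Ctx F p n k l m M α) (x : F) : (x ^ l) ^ l = x := by
  rw [← pow_mul, ← sq, ← h.card]; exact FiniteField.pow_card x

lemma pow_order (h : Ctx F p n k l m M α) {x : F} (hx : x ≠ 0) : x ^ (8 * (m * M)) = 1 := by
  rw [← h.card_sub, ← h.card]; exact FiniteField.pow_card_sub_one_eq_one x hx

lemma two_ne (h : Ctx F p n k l m M α) : (2 : F) ≠ 0 := by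
  intro h2
  have h0 := FiniteField.cast_card_eq_zero F
  rw [h.card, h.hl] at h0
  push_cast at h0
  have : (1 : F) = 0 := by linear_combination h0 - (32 * k^2 + 24 * k + 4) * h2
  exact one_ne_zero this

lemma one_ne_neg (h : Ctx F p n k l m M α) : (1 : F) ≠ -1 := by
  intro e
  apply h.two_ne
  linear_combination e

lemma θ4 (h : Ctx F p n k l m M α) : (α ^ (m * M)) ^ 4 = -1 := by
  have h8 : (α ^ (m * M)) ^ 8 = 1 := by
    rw [← pow_mul, mul_comm]; exact h.prim.pow_eq_one
  have hp := Nat.mul_pos h.mpos h.Mpos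
  have hne : (α ^ (m * M)) ^ 4 ≠ 1 := by
    rw [← pow_mul]
    exact h.prim.pow_ne_one_of_pos_of_lt (by omega) (by omega)
  have : ((α ^ (m * M)) ^ 4 - 1) * ((α ^ (m * M)) ^ 4 + 1) = 0 := by
    linear_combination h8
  rcases mul_eq_zero.1 this with e | e
  · exact absurd (sub_eq_zero.1 e) hne
  · linear_combination e

lemma θprim (h : Ctx F p n k l m M α) : IsPrimitiveRoot (α ^ (m * M)) 8 := by
  refine h.prim.pow ?_ (by ring)
  have hp := Nat.mul_pos h.mpos h.Mpos
  omega

lemma card_Rt (h : Ctx F p n k l m M α) {r s : ℕ} (hrs : 8 * (m * M) = s * r) : (Rt F r).card = r := by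
  have hp := Nat.mul_pos h.mpos h.Mpos
  have hr : 0 < r := by
    rcases Nat.eq_zero_or_pos r with e | e
    · rw [e, mul_zero] at hrs; omega
    · exact e
  have hpr : IsPrimitiveRoot (α ^ s) r := h.prim.pow (by omega) hrs
  refine Eq.trans ?_ hpr.card_nthRootsFinset
  congr 1
  ext x
  rw [mem_Rt, Polynomial.mem_nthRootsFinset hr]

lemma α_ne (h : Ctx F p n k l m M α) : α ≠ 0 := by
  have hp := Nat.mul_pos h.mpos h.Mpos
  exact h.prim.ne_zero (by omega)

/-- class sizes -/
lemma card_class (h : Ctx F p n k l m M α) (j : ℕ) :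
    (univ.filter (fun x : F => x ^ (m * M) = (α ^ (m * M)) ^ j)).card = m * M := by
  refine Eq.trans ?_ (h.card_Rt (r := m * M) (s := 8) rfl)
  symm
  apply Finset.card_bij (fun x _ => α ^ j * x)
  · intro x hx
    rw [mem_Rt] at hx
    simp only [mem_filter, mem_univ, true_and]
    rw [mul_pow, hx, mul_one, ← pow_mul, ← pow_mul, mul_comm]
  · intro a _ b _ e
    exact mul_left_cancel₀ (pow_ne_zero _ h.α_ne) e
  · intro b hb
    simp only [mem_filter, mem_univ, true_and] at hb
    have hα := pow_ne_zero j h.α_ne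
    refine ⟨b / α ^ j, ?_, by field_simp⟩
    rw [mem_Rt, div_pow, hb, ← pow_mul, ← pow_mul, mul_comm]
    exact div_self (pow_ne_zero _ h.α_ne)

lemma classes (h : Ctx F p n k l m M α) {x : F} (hx : x ≠ 0) : ∃ j < 8, x ^ (m * M) = (α ^ (m * M)) ^ j := by
  have e : (x ^ (m * M)) ^ 8 = 1 := by rw [← pow_mul, mul_comm]; exact h.pow_order hx
  obtain ⟨j, hj, hj'⟩ := h.θprim.eq_pow_of_pow_eq_one e
  exact ⟨j, hj, hj'.symm⟩

/-! ### zf -/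

lemma zf_pow (h : Ctx F p n k l m M α) (x y : F) : zf l x y ^ l = - zf l x y := by
  unfold zf
  rw [h.sub_pow, mul_pow, mul_pow, h.pow_ll, h.pow_ll]; ring

lemma zf_pow2m (h : Ctx F p n k l m M α) {x y : F} (hz : zf l x y ≠ 0) : zf l x y ^ (2 * m) = -1 := by
  have := h.zf_pow x y
  rw [h.l_eq, pow_succ] at this
  rw [← h.l_eq] at this
  exact mul_right_cancel₀ hz (this.trans (by ring))

lemma zf_swap (x y : F) : zf l y x = - zf l x y := by unfold zf; ring

lemma neg_zf (h : Ctx F p n k l m M α) (x y : F) : zf l (-x) y = - zf l x y := by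
  unfold zf; rw [h.lodd.neg_pow]; ring

lemma zf_smul {a : F} (ha : a ^ l = a) (x y : F) : zf l (a * x) y = a * zf l x y := by
  unfold zf; rw [mul_pow, ha]; ring

lemma zf_smul_right {a : F} (ha : a ^ l = a) (x y : F) : zf l x (a * y) = a * zf l x y := by
  unfold zf; rw [mul_pow, ha]; ring

lemma zf_sub (h : Ctx F p n k l m M α) (x y w : F) : zf l (x - y) w = zf l x w - zf l y w := by
  unfold zf; rw [h.sub_pow]; ring

lemma zf_self (x : F) : zf l x x = 0 := by unfold zf; ring

lemma ff_cases (h : Ctx F p n k l m M α) {i : F} (hi : i ^ 2 = -1) {x y : F} (hz : zf l x y ≠ 0) :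
    zf l x y ^ m = i ∨ zf l x y ^ m = -i := by
  have := h.zf_pow2m hz
  rw [mul_comm, pow_mul] at this
  rw [← sq_eq_sq_iff_eq_or_eq_neg, this, hi]

lemma i_ne {i : F} (hi : i ^ 2 = -1) : i ≠ 0 := by
  rintro rfl
  simp at hi

lemma i_ne_neg (h : Ctx F p n k l m M α) {i : F} (hi : i ^ 2 = -1) : -i ≠ i := by
  intro e
  have : (2 : F) * i = 0 := by linear_combination -e
  rcases mul_eq_zero.1 this with e | e
  · exact h.two_ne e
  · exact i_ne hi e

lemma ff_cast (h : Ctx F p n k l m M α) {i : F} (hi : i ^ 2 = -1) (x y : F) : (ff l m i x y : F) * i = zf l x y ^ m := by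
  unfold ff
  split_ifs with h1 h2
  · rw [h1, zero_pow h.mpos.ne']; simp
  · rw [h2]; simp
  · rcases h.ff_cases hi h1 with e | e
    · exact absurd e h2
    · rw [e]; simp

/-- ff is determined by zf^m -/
lemma ff_congr (h : Ctx F p n k l m M α) {i : F} {x y x' y' : F}
    (e : zf l x y ^ m = zf l x' y' ^ m) : ff l m i x y = ff l m i x' y' := by
  unfold ff
  have : zf l x y = 0 ↔ zf l x' y' = 0 := by
    rw [← pow_eq_zero_iff h.mpos.ne', e, pow_eq_zero_iff h.mpos.ne']
  rw [e]
  simp only [this]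

lemma ff_neg (h : Ctx F p n k l m M α) {i : F} (hi : i ^ 2 = -1) {x y x' y' : F}
    (e : zf l x y ^ m = - zf l x' y' ^ m) : ff l m i x y = - ff l m i x' y' := by
  unfold ff
  have h0 : zf l x y = 0 ↔ zf l x' y' = 0 := by
    rw [← pow_eq_zero_iff h.mpos.ne', e, neg_eq_zero, pow_eq_zero_iff h.mpos.ne']
  rw [e]
  simp only [h0]
  by_cases hz : zf l x' y' = 0
  · simp [hz]
  · simp only [hz, if_false]
    rcases h.ff_cases hi hz with e1 | e1
    · rw [e1]; simp [h.i_ne_neg hi]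
    · rw [e1]; simp [h.i_ne_neg hi]

lemma ff_swap (h : Ctx F p n k l m M α) {i : F} (hi : i ^ 2 = -1) (x y : F) : ff l m i y x = - ff l m i x y := by
  apply h.ff_neg hi
  rw [zf_swap, h.modd.neg_pow]

lemma ff_neg_left (h : Ctx F p n k l m M α) {i : F} (hi : i ^ 2 = -1) (x y : F) : ff l m i (-x) y = - ff l m i x y := by
  apply h.ff_neg hi
  rw [h.neg_zf, h.modd.neg_pow]

lemma Rt_pow (h : Ctx F p n k l m M α) {a : F} (ha : a ^ m = 1) : a ^ l = a := by
  rw [h.l_eq, pow_succ, mul_comm 2 m, pow_mul, ha]; ring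

lemma Rt2_pow (h : Ctx F p n k l m M α) {a : F} (ha : a ^ (2 * m) = 1) : a ^ l = a := by
  rw [h.l_eq, pow_succ, ha]; ring

lemma K_pow (h : Ctx F p n k l m M α) {a : F} (h0 : a ≠ 0) (ha : a ^ l = a) : a ^ (2 * m) = 1 := by
  rw [h.l_eq, pow_succ] at ha
  exact mul_right_cancel₀ h0 (ha.trans (one_mul a).symm)

lemma zf_zero_iff (h : Ctx F p n k l m M α) {x y : F} (hx : x ≠ 0) : zf l x y = 0 ↔ (y / x) ^ l = y / x := by
  unfold zf
  rw [div_pow, div_eq_div_iff (pow_ne_zero _ hx) hx, sub_eq_zero]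
  constructor <;> intro e <;> linear_combination -e

end Ctx

end Main

section Count

set_option linter.unusedSectionVars false

variable {F : Type*} [Field F] [Fintype F] [DecidableEq F] {p n k l m M : ℕ} {α : F}

def NN (D : Finset F) (g : F) : ℤ := ∑ x ∈ D, ∑ y ∈ D, if x - y = g then 1 else 0

def WW (Γ : Finset F) (g u v : F) : ℤ := ∑ a ∈ Γ, ∑ b ∈ Γ, if a * u - b * v = g then 1 else 0

lemma sum_smul_inv {R : Type*} [AddCommMonoid R] (D : Finset F) {a : F} (ha : a ≠ 0)
    (hD : ∀ u, a * u ∈ D ↔ u ∈ D) (φ : F → R) : ∑ u ∈ D, φ (a * u) = ∑ u ∈ D, φ u := by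
  apply Finset.sum_equiv (Equiv.mulLeft₀ a ha)
  · intro i; simp [hD]
  · intro i _; simp

lemma avg (Γ D : Finset F) (h0 : ∀ a ∈ Γ, a ≠ 0) (hD : ∀ a ∈ Γ, ∀ u, a * u ∈ D ↔ u ∈ D) (g : F) :
    (Γ.card : ℤ) ^ 2 * NN D g = ∑ u ∈ D, ∑ v ∈ D, WW Γ g u v := by
  have e1 : ∑ u ∈ D, ∑ v ∈ D, WW Γ g u v =
      ∑ a ∈ Γ, ∑ b ∈ Γ, ∑ u ∈ D, ∑ v ∈ D, if a * u - b * v = g then (1 : ℤ) else 0 := by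
    unfold WW
    calc _ = ∑ u ∈ D, ∑ a ∈ Γ, ∑ v ∈ D, ∑ b ∈ Γ, (if a * u - b * v = g then (1 : ℤ) else 0) := by
          apply sum_congr rfl; intro u _; rw [sum_comm]
      _ = ∑ a ∈ Γ, ∑ u ∈ D, ∑ v ∈ D, ∑ b ∈ Γ, (if a * u - b * v = g then (1 : ℤ) else 0) := by
          rw [sum_comm]
      _ = ∑ a ∈ Γ, ∑ u ∈ D, ∑ b ∈ Γ, ∑ v ∈ D, (if a * u - b * v = g then (1 : ℤ) else 0) := by
          apply sum_congr rfl; intro a _; apply sum_congr rfl; intro u _; rw [sum_comm]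
      _ = _ := by
          apply sum_congr rfl; intro a _; rw [sum_comm]
  rw [e1]
  have e2 : ∀ a ∈ Γ, ∀ b ∈ Γ, (∑ u ∈ D, ∑ v ∈ D, if a * u - b * v = g then (1 : ℤ) else 0)
      = NN D g := by
    intro a ha b hb
    unfold NN
    rw [sum_smul_inv D (h0 a ha) (hD a ha) (fun u => ∑ v ∈ D, if u - b * v = g then (1 : ℤ) else 0)]
    apply sum_congr rfl; intro u _
    exact sum_smul_inv D (h0 b hb) (hD b hb) (fun v => if u - v = g then (1 : ℤ) else 0)
  rw [sum_congr rfl (fun a ha => sum_congr rfl (fun b hb => e2 a ha b hb))]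
  simp only [sum_const, nsmul_eq_mul]
  ring

lemma sum_NN (D : Finset F) : ∑ s ∈ univ.erase (0 : F), NN D s = (D.card : ℤ) ^ 2 - D.card := by
  unfold NN
  rw [sum_comm]
  have e : ∀ x ∈ D, (∑ s ∈ univ.erase (0 : F), ∑ y ∈ D, if x - y = s then (1 : ℤ) else 0)
      = (D.card : ℤ) - 1 := by
    intro x hx
    rw [sum_comm]
    have : ∀ y ∈ D, (∑ s ∈ univ.erase (0 : F), if x - y = s then (1 : ℤ) else 0) =
        1 - if x = y then 1 else 0 := by
      intro y _
      rw [sum_ite_eq]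
      simp only [mem_erase, mem_univ, and_true, ne_eq, sub_eq_zero]
      split_ifs <;> simp_all
    rw [sum_congr rfl this, sum_sub_distrib, sum_ite_eq, if_pos hx]
    simp
  rw [sum_congr rfl e]
  simp only [sum_const, nsmul_eq_mul]
  ring

namespace Ctx


lemma W_indep (h : Ctx F p n k l m M α) (Γ : Finset F) (hΓ : ∀ a ∈ Γ, a ^ l = a) (g : F) {u v : F} (hd : zf l u v ≠ 0) :
    WW Γ g u v = (if zf l g v / zf l u v ∈ Γ then 1 else 0) *
      (if zf l g u / zf l u v ∈ Γ then 1 else 0) := by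
  have e : ∀ a ∈ Γ, ∀ b ∈ Γ, (if a * u - b * v = g then (1 : ℤ) else 0) =
      (if zf l g v / zf l u v = a then 1 else 0) * (if zf l g u / zf l u v = b then 1 else 0) := by
    intro a ha b hb
    have iff1 : a * u - b * v = g ↔ (zf l g v / zf l u v = a ∧ zf l g u / zf l u v = b) := by
      constructor
      · intro e
        rw [div_eq_iff hd, div_eq_iff hd]
        constructor
        · rw [← e, h.zf_sub, zf_smul (hΓ a ha), zf_smul (hΓ b hb), zf_self]; ring
        · rw [← e, h.zf_sub, zf_smul (hΓ a ha), zf_smul (hΓ b hb), zf_self, zf_swap u v]; ring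
      · rintro ⟨rfl, rfl⟩
        field_simp
        unfold zf
        ring
    by_cases h1 : zf l g v / zf l u v = a <;> by_cases h2 : zf l g u / zf l u v = b <;>
      simp [iff1, h1, h2]
  unfold WW
  rw [sum_congr rfl (fun a ha => sum_congr rfl (fun b hb => e a ha b hb))]
  rw [← sum_mul_sum, sum_ite_eq, sum_ite_eq]

lemma W_dep (Γ : Finset F) (g : F) {u v : F} (hu : u ≠ 0) (hv : v ≠ 0)
    (ht : ∀ b, (v / u) * b ∈ Γ ↔ b ∈ Γ) :
    WW Γ g u v = NN Γ (g / u) := by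
  unfold WW NN
  apply sum_congr rfl; intro a _
  rw [← sum_smul_inv Γ (div_ne_zero hv hu) ht (fun b => if a - b = g / u then (1 : ℤ) else 0)]
  apply sum_congr rfl; intro b _
  have : a * u - b * v = g ↔ a - v / u * b = g / u := by
    rw [eq_div_iff hu]
    field_simp
  simp only [this]

lemma NN_zero (h : Ctx F p n k l m M α) (Γ : Finset F) (hΓ : ∀ a ∈ Γ, a ^ l = a) {s : F} (hs : s ^ l ≠ s) : NN Γ s = 0 := by
  unfold NN
  apply sum_eq_zero; intro a ha
  apply sum_eq_zero; intro b hb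
  rw [if_neg]
  rintro rfl
  apply hs
  rw [h.sub_pow, hΓ a ha, hΓ b hb]

lemma NN_Rt2 (h : Ctx F p n k l m M α) {s : F} (hs : s ≠ 0) (hs' : s ^ l = s) : NN (Rt F (2 * m)) s = 2 * m - 1 := by
  unfold NN
  have hm := h.mpos
  have e : ∀ a ∈ Rt F (2 * m), (∑ b ∈ Rt F (2 * m), if a - b = s then (1 : ℤ) else 0) =
      1 - if a = s then 1 else 0 := by
    intro a ha
    have : ∀ b, a - b = s ↔ a - s = b := by
      intro b; constructor <;> rintro rfl <;> ring
    simp only [this]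
    rw [sum_ite_eq]
    by_cases hh : a = s
    · rw [if_pos hh, if_neg]; · rfl
      rw [hh, sub_self, mem_Rt, zero_pow (by omega)]
      exact zero_ne_one
    · rw [if_neg hh, if_pos]; · rfl
      rw [mem_Rt] at ha ⊢
      apply h.K_pow (sub_ne_zero.2 hh)
      rw [h.sub_pow, h.Rt2_pow ha, hs']
  rw [sum_congr rfl e, sum_sub_distrib, sum_ite_eq', if_pos (mem_Rt.2 (h.K_pow hs hs'))]
  have := h.card_Rt (r := 2 * m) (s := 4 * M) (by ring)
  simp [this]

lemma NN_smul (Γ : Finset F) {c : F} (hc : c ≠ 0) (hΓ : ∀ b, c * b ∈ Γ ↔ b ∈ Γ) (s : F) :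
    NN Γ (c * s) = NN Γ s := by
  unfold NN
  rw [← sum_smul_inv Γ hc hΓ]
  apply sum_congr rfl; intro a _
  rw [← sum_smul_inv Γ hc hΓ]
  apply sum_congr rfl; intro b _
  have : c * a - c * b = c * s ↔ a - b = s := by
    rw [← mul_sub]; exact mul_right_inj' hc
  simp only [this]

lemma NN_neg (Γ : Finset F) (s : F) : NN Γ (-s) = NN Γ s := by
  unfold NN
  rw [sum_comm]
  apply sum_congr rfl; intro a _
  apply sum_congr rfl; intro b _
  have : b - a = -s ↔ a - b = s := by
    constructor <;> intro e
    · linear_combination -e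
    · linear_combination -e
  simp only [this]

lemma Rt_ne (h : Ctx F p n k l m M α) {r : ℕ} (hr : 0 < r) {a : F} (ha : a ^ r = 1) : a ≠ 0 := by
  rintro rfl
  rw [zero_pow hr.ne'] at ha
  exact zero_ne_one ha

lemma Rt_smul {r : ℕ} {c : F} (hc : c ^ r = 1) (b : F) : c * b ∈ Rt F r ↔ b ∈ Rt F r := by
  rw [mem_Rt, mem_Rt, mul_pow, hc, one_mul]

lemma NN_Rt (h : Ctx F p n k l m M α) {s : F} (hs : s ≠ 0) (hs' : s ^ l = s) : 2 * NN (Rt F m) s = m - 1 := by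
  have hm := h.mpos
  have const : ∀ s ∈ Rt F (2 * m), NN (Rt F m) s = NN (Rt F m) 1 := by
    intro s hs
    rw [mem_Rt, mul_comm, pow_mul] at hs
    replace hs := (by simpa using hs : s ^ m = 1 ∨ s ^ m = -1)
    have one : ∀ s : F, s ^ m = 1 → NN (Rt F m) s = NN (Rt F m) 1 := by
      intro s hs
      have := NN_smul (Rt F m) (h.Rt_ne hm hs) (Rt_smul hs) 1
      rwa [mul_one] at this
    rcases hs with hs | hs
    · exact one s hs
    · rw [← NN_neg]
      apply one
      rw [h.modd.neg_pow, hs, neg_neg]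
  have tot := sum_NN (Rt F m)
  have sub : Rt F (2 * m) ⊆ univ.erase (0 : F) := by
    intro x hx
    rw [mem_Rt] at hx
    simp [h.Rt_ne (by omega) hx]
  rw [← sum_subset sub, sum_congr rfl const] at tot
  · have c1 := h.card_Rt (r := 2 * m) (s := 4 * M) (by ring)
    have c2 := h.card_Rt (r := m) (s := 8 * M) (by ring)
    rw [sum_const, c1, c2, nsmul_eq_mul] at tot
    rw [const s (mem_Rt.2 (h.K_pow hs hs'))]
    have : (m : ℤ) ≠ 0 := by exact_mod_cast hm.ne'
    apply mul_left_cancel₀ this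
    push_cast at tot
    linear_combination tot
  · intro x hx hx'
    simp only [mem_erase, mem_univ, and_true] at hx
    apply h.NN_zero
    · intro a ha; exact h.Rt_pow (mem_Rt.1 ha)
    · intro e; exact hx' (mem_Rt.2 (h.K_pow hx e))

end Ctx
end Count

section Formula

set_option linter.unusedSectionVars false

variable {F : Type*} [Field F] [Fintype F] [DecidableEq F] {p n k l m M : ℕ} {α : F}

namespace Ctx


lemma ff_sq (i x y : F) : ff l m i x y ^ 2 = if zf l x y = 0 then 0 else 1 := by
  unfold ff; split_ifs <;> simp

lemma ff_ind (h : Ctx F p n k l m M α) {i : F} (hi : i ^ 2 = -1) {x y x' y' : F} (hd : zf l x' y' ≠ 0) :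
    2 * (if zf l x y / zf l x' y' ∈ Rt F m then (1 : ℤ) else 0) =
      ff l m i x y ^ 2 + ff l m i x y * ff l m i x' y' := by
  simp only [mem_Rt, div_pow, div_eq_one_iff_eq (pow_ne_zero _ hd), ff_sq]
  unfold ff
  rw [if_neg hd]
  have hn := h.i_ne_neg hi
  by_cases hz : zf l x y = 0
  · rw [if_neg]
    · simp [hz]
    · rw [hz, zero_pow h.mpos.ne']
      exact (pow_ne_zero _ hd).symm
  · simp only [hz, if_false]
    rcases h.ff_cases hi hz with e1 | e1 <;> rcases h.ff_cases hi hd with e2 | e2 <;>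
      rw [e1, e2] <;> simp [hn, hn.symm]

lemma dep_count (Γ D : Finset F) (h0 : ∀ a ∈ Γ, a ≠ 0)
    (hD : ∀ a ∈ Γ, ∀ u, a * u ∈ D ↔ u ∈ D) {u : F} (hu : u ∈ D) (hu0 : u ≠ 0) (c : ℤ) :
    (∑ v ∈ D, if v / u ∈ Γ then c else 0) = Γ.card * c := by
  rw [← sum_filter, sum_const, nsmul_eq_mul]
  congr 2
  symm
  apply Finset.card_bij (fun a _ => a * u)
  · intro a ha
    rw [mem_filter, mul_div_cancel_right₀ _ hu0]
    exact ⟨(hD a ha u).2 hu, ha⟩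
  · intro a _ b _ e
    exact mul_right_cancel₀ hu0 e
  · intro b hb
    rw [mem_filter] at hb
    exact ⟨b / u, hb.2, by field_simp⟩

lemma formulaD (h : Ctx F p n k l m M α) (D : Finset F) {i : F} (hi : i ^ 2 = -1) (hD0 : ∀ u ∈ D, u ≠ 0)
    (hD : ∀ a ∈ Rt F m, ∀ u, a * u ∈ D ↔ u ∈ D)
    (hdep : ∀ u ∈ D, ∀ v ∈ D, zf l u v = 0 → v / u ∈ Rt F m) {g : F} (hg : g ≠ 0) :
    4 * (m : ℤ) ^ 2 * NN D g = (∑ u ∈ D, ff l m i g u ^ 2) ^ 2 + (∑ u ∈ D, ff l m i g u) ^ 2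
      - 2 * m * (∑ u ∈ D, ff l m i g u ^ 2)
      + 2 * (m - 1) * m * (D.card - ∑ u ∈ D, ff l m i g u ^ 2) := by
  have hm := h.mpos
  have h0 : ∀ a ∈ Rt F m, a ≠ 0 := fun a ha => h.Rt_ne hm (mem_Rt.1 ha)
  have hK : ∀ a ∈ Rt F m, a ^ l = a := fun a ha => h.Rt_pow (mem_Rt.1 ha)
  have cH := h.card_Rt (r := m) (s := 8 * M) (by ring)
  have hav := avg (Rt F m) D h0 hD g
  rw [cH] at hav
  have term : ∀ u ∈ D, ∀ v ∈ D, 4 * WW (Rt F m) g u v =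
      (ff l m i g u ^ 2 * ff l m i g v ^ 2 + ff l m i g u * ff l m i g v
        + ff l m i u v * (ff l m i g v ^ 2 * ff l m i g u + ff l m i g u ^ 2 * ff l m i g v))
      + (if v / u ∈ Rt F m then
          (-2 * ff l m i g u ^ 2 + 2 * (m - 1) * (1 - ff l m i g u ^ 2)) else 0) := by
    intro u hu v hv
    have hu0 := hD0 u hu
    have hv0 := hD0 v hv
    by_cases hd : zf l u v = 0
    · have ht := hdep u hu v hv hd
      rw [if_pos ht, W_dep (Rt F m) g hu0 hv0 (Rt_smul (mem_Rt.1 ht))]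
      have f0 : ff l m i u v = 0 := by unfold ff; rw [if_pos hd]
      have fe : ff l m i g v = ff l m i g u := by
        apply h.ff_congr
        have : v = v / u * u := by field_simp
        rw [this, zf_smul_right (hK _ ht), mul_pow, mem_Rt.1 ht, one_mul]
      rw [f0, fe]
      have iff1 := h.zf_zero_iff (x := u) (y := g) hu0
      by_cases hz : zf l g u = 0
      · have hfz : ff l m i g u = 0 := by unfold ff; rw [if_pos hz]
        rw [hfz]
        have := h.NN_Rt (div_ne_zero hg hu0) (iff1.1 (by rw [zf_swap, hz, neg_zero]))
        linear_combination 2 * this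
      · have hsq : ff l m i g u ^ 2 = 1 := by rw [ff_sq, if_neg hz]
        rw [h.NN_zero _ hK (s := g / u)]
        · linear_combination (-ff l m i g u ^ 2 - 2 + 2 * (m : ℤ)) * hsq
        · intro e
          apply hz
          rw [zf_swap, iff1.2 e, neg_zero]
    · rw [if_neg, h.W_indep _ hK g hd]
      · have e1 := h.ff_ind hi (x := g) (y := v) hd
        have e2 := h.ff_ind hi (x := g) (y := u) hd
        have e3 : ff l m i u v ^ 2 = 1 := by rw [ff_sq, if_neg hd]
        linear_combination (2 * (if zf l g u / zf l u v ∈ Rt F m then (1 : ℤ) else 0)) * e1 +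
          (ff l m i g v ^ 2 + ff l m i g v * ff l m i u v) * e2 +
            ff l m i g u * ff l m i g v * e3
      · intro ht
        exact hd ((h.zf_zero_iff hu0).2 (hK _ ht))
  have anti : ∑ u ∈ D, ∑ v ∈ D, ff l m i u v *
      (ff l m i g v ^ 2 * ff l m i g u + ff l m i g u ^ 2 * ff l m i g v) = 0 := by
    have : ∑ u ∈ D, ∑ v ∈ D, ff l m i u v *
      (ff l m i g v ^ 2 * ff l m i g u + ff l m i g u ^ 2 * ff l m i g v) =
      - ∑ u ∈ D, ∑ v ∈ D, ff l m i u v *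
      (ff l m i g v ^ 2 * ff l m i g u + ff l m i g u ^ 2 * ff l m i g v) := by
      conv_lhs => rw [sum_comm]
      rw [← sum_neg_distrib]
      apply sum_congr rfl; intro u _
      rw [← sum_neg_distrib]
      apply sum_congr rfl; intro v _
      rw [h.ff_swap hi u v]
      ring
    omega
  have tot : 4 * ∑ u ∈ D, ∑ v ∈ D, WW (Rt F m) g u v =
      (∑ u ∈ D, ff l m i g u ^ 2) * (∑ u ∈ D, ff l m i g u ^ 2) +
      (∑ u ∈ D, ff l m i g u) * (∑ u ∈ D, ff l m i g u) + 0 +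
      ∑ u ∈ D, (m : ℤ) * (-2 * ff l m i g u ^ 2 + 2 * (m - 1) * (1 - ff l m i g u ^ 2)) := by
    rw [← anti, sum_mul_sum, sum_mul_sum, mul_sum, ← sum_add_distrib, ← sum_add_distrib,
      ← sum_add_distrib]
    apply sum_congr rfl; intro u hu
    have := dep_count (Rt F m) D h0 hD hu (hD0 u hu)
      (-2 * ff l m i g u ^ 2 + 2 * (m - 1) * (1 - ff l m i g u ^ 2))
    rw [cH] at this
    rw [← this, mul_sum, ← sum_add_distrib, ← sum_add_distrib,
      ← sum_add_distrib]
    apply sum_congr rfl; intro v hv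
    rw [term u hu v hv]
  have last : ∑ u ∈ D, (m : ℤ) * (-2 * ff l m i g u ^ 2 + 2 * (m - 1) * (1 - ff l m i g u ^ 2)) =
      - 2 * m * (∑ u ∈ D, ff l m i g u ^ 2)
      + 2 * (m - 1) * m * (D.card - ∑ u ∈ D, ff l m i g u ^ 2) := by
    rw [← mul_sum, sum_add_distrib, ← mul_sum, ← mul_sum, sum_sub_distrib]
    simp
    ring
  rw [last] at tot
  linear_combination 4 * hav + tot

lemma formulaA (h : Ctx F p n k l m M α) (D : Finset F) {i : F} (hD0 : ∀ u ∈ D, u ≠ 0)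
    (hD : ∀ a ∈ Rt F (2 * m), ∀ u, a * u ∈ D ↔ u ∈ D) {g : F} (hg : g ≠ 0) :
    4 * (m : ℤ) ^ 2 * NN D g = (∑ u ∈ D, ff l m i g u ^ 2) ^ 2
      - 2 * m * (∑ u ∈ D, ff l m i g u ^ 2)
      + 2 * m * (2 * m - 1) * (D.card - ∑ u ∈ D, ff l m i g u ^ 2) := by
  have hm := h.mpos
  have h0 : ∀ a ∈ Rt F (2 * m), a ≠ 0 := fun a ha => h.Rt_ne (by omega) (mem_Rt.1 ha)
  have hK : ∀ a ∈ Rt F (2 * m), a ^ l = a := fun a ha => h.Rt2_pow (mem_Rt.1 ha)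
  have cH := h.card_Rt (r := 2 * m) (s := 4 * M) (by ring)
  have hav := avg (Rt F (2 * m)) D h0 hD g
  rw [cH] at hav
  have term : ∀ u ∈ D, ∀ v ∈ D, WW (Rt F (2 * m)) g u v =
      ff l m i g u ^ 2 * ff l m i g v ^ 2 
      + (if v / u ∈ Rt F (2 * m) then
          (-ff l m i g u ^ 2 + (2 * m - 1) * (1 - ff l m i g u ^ 2)) else 0) := by
    intro u hu v hv
    have hu0 := hD0 u hu
    have hv0 := hD0 v hv
    by_cases hd : zf l u v = 0
    · have ht : v / u ∈ Rt F (2 * m) :=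
        mem_Rt.2 (h.K_pow (div_ne_zero hv0 hu0) ((h.zf_zero_iff hu0).1 hd))
      rw [if_pos ht, W_dep (Rt F (2 * m)) g hu0 hv0 (Rt_smul (mem_Rt.1 ht))]
      have fe : ff l m i g v ^ 2 = ff l m i g u ^ 2 := by
        have : v = v / u * u := by field_simp
        rw [ff_sq, ff_sq, this, zf_smul_right (hK _ ht)]
        simp [hv0, hu0]
      rw [fe]
      have iff1 := h.zf_zero_iff (x := u) (y := g) hu0
      by_cases hz : zf l g u = 0
      · rw [h.NN_Rt2 (div_ne_zero hg hu0) (iff1.1 (by rw [zf_swap, hz, neg_zero])), ff_sq,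
          if_pos hz]
        ring
      · rw [h.NN_zero _ hK (s := g / u), ff_sq, if_neg hz]
        · ring
        · intro e
          apply hz
          rw [zf_swap, iff1.2 e, neg_zero]
    · rw [if_neg, h.W_indep _ hK g hd]
      · have e1 : ∀ w, (if zf l g w / zf l u v ∈ Rt F (2 * m) then (1 : ℤ) else 0) =
            ff l m i g w ^ 2 := by
          intro w
          simp only [ff_sq, mem_Rt]
          by_cases hz : zf l g w = 0
          · rw [if_pos hz, if_neg]
            rw [hz, zero_div, zero_pow (by omega)]
            exact zero_ne_one
          · rw [if_neg hz, if_pos]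
            rw [div_pow, h.zf_pow2m hz, h.zf_pow2m hd]
            simp
        rw [e1, e1]
        ring
      · intro ht
        exact hd ((h.zf_zero_iff hu0).2 (hK _ ht))
  have tot : ∑ u ∈ D, ∑ v ∈ D, WW (Rt F (2 * m)) g u v =
      (∑ u ∈ D, ff l m i g u ^ 2) * (∑ u ∈ D, ff l m i g u ^ 2) +
      ∑ u ∈ D, ((2 * m : ℕ) : ℤ) * (-ff l m i g u ^ 2 + (2 * m - 1) * (1 - ff l m i g u ^ 2)) := by
    rw [sum_mul_sum, ← sum_add_distrib]
    apply sum_congr rfl; intro u hu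
    have := dep_count (Rt F (2 * m)) D h0 hD hu (hD0 u hu)
      (-ff l m i g u ^ 2 + (2 * m - 1) * (1 - ff l m i g u ^ 2))
    rw [cH] at this
    rw [← this, ← sum_add_distrib]
    apply sum_congr rfl; intro v hv
    rw [term u hu v hv]
  have last : ∑ u ∈ D, ((2 * m : ℕ) : ℤ) *
      (-ff l m i g u ^ 2 + (2 * m - 1) * (1 - ff l m i g u ^ 2)) =
      - 2 * m * (∑ u ∈ D, ff l m i g u ^ 2)
      + 2 * m * (2 * m - 1) * (D.card - ∑ u ∈ D, ff l m i g u ^ 2) := by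
    rw [← mul_sum, sum_add_distrib, ← mul_sum, sum_sub_distrib, sum_neg_distrib]
    simp
    ring
  rw [last] at tot
  push_cast at hav
  linear_combination hav + tot

end Ctx
end Formula

section Classes

set_option linter.unusedSectionVars false

variable {F : Type*} [Field F] [Fintype F] [DecidableEq F] {p n k l m M : ℕ} {α : F}

def DD (α : F) (r : ℕ) : Finset F :=
  univ.filter (fun x => x ^ r = (α ^ r) ^ 3 ∨ x ^ r = (α ^ r) ^ 5)

def TT (l m r : ℕ) (α i g : F) : ℤ := ∑ u ∈ DD α r, ff l m i g u

lemma mem_DD {r : ℕ} {x : F} : x ∈ DD α r ↔ x ^ r = (α ^ r) ^ 3 ∨ x ^ r = (α ^ r) ^ 5 := by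
  simp [DD]

namespace Ctx


lemma mMpos (h : Ctx F p n k l m M α) : 0 < m * M := Nat.mul_pos h.mpos h.Mpos

lemma mModd (h : Ctx F p n k l m M α) : Odd (m * M) := h.modd.mul h.Modd

lemma DD_ne (h : Ctx F p n k l m M α) {u : F} (hu : u ∈ DD α (m * M)) : u ≠ 0 := by
  rintro rfl
  rw [mem_DD, zero_pow h.mMpos.ne'] at hu
  have := pow_ne_zero (m * M) h.α_ne
  rcases hu with e | e <;> exact pow_ne_zero _ this e.symm

lemma DD_smul {r : ℕ} {c : F} (hc : c ^ r = 1) (u : F) : c * u ∈ DD α r ↔ u ∈ DD α r := by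
  rw [mem_DD, mem_DD, mul_pow, hc, one_mul]

lemma θ_inj (h : Ctx F p n k l m M α) {a b : ℕ} (ha : a < 8) (hb : b < 8) (e : (α ^ (m * M)) ^ a = (α ^ (m * M)) ^ b) :
    a = b := h.θprim.pow_inj ha hb e

lemma K_char (h : Ctx F p n k l m M α) {t : F} (ht : t ^ (2 * m) = 1) :
    (t ^ m = 1 ∧ t ^ (m * M) = 1) ∨ (t ^ m = -1 ∧ t ^ (m * M) = (α ^ (m * M)) ^ 4) := by
  rw [mul_comm, pow_mul] at ht
  replace ht : t ^ m = 1 ∨ t ^ m = -1 := by simpa using ht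
  rw [h.θ4]
  rcases ht with e | e
  · left; exact ⟨e, by rw [pow_mul, e, one_pow]⟩
  · right; exact ⟨e, by rw [pow_mul, e, h.Modd.neg_one_pow]⟩

lemma DD_dep (h : Ctx F p n k l m M α) {u v : F} (hu : u ∈ DD α (m * M)) (hv : v ∈ DD α (m * M)) (hz : zf l u v = 0) :
    v / u ∈ Rt F m := by
  have hu0 := h.DD_ne hu
  have hv0 := h.DD_ne hv
  rw [mem_Rt]
  rcases h.K_char (h.K_pow (div_ne_zero hv0 hu0) ((h.zf_zero_iff hu0).1 hz)) with e | e
  · exact e.1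
  · exfalso
    have e2 : v ^ (m * M) = u ^ (m * M) * (α ^ (m * M)) ^ 4 := by
      rw [← e.2, ← mul_pow]; congr 1; field_simp
    rw [mem_DD] at hu hv
    have h8 := h.θprim.pow_eq_one
    have inj := @h.θ_inj
    generalize α ^ (m * M) = θ at *
    rcases hu with hu | hu <;> rcases hv with hv | hv <;> rw [hu, hv] at e2
    · have := inj (a := 3) (b := 7) (by norm_num) (by norm_num) (by linear_combination e2)
      omega
    · have := inj (a := 5) (b := 7) (by norm_num) (by norm_num) (by linear_combination e2)
      omega
    · have := inj (a := 3) (b := 1) (by norm_num) (by norm_num) (by linear_combination e2 + θ * h8)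
      omega
    · have := inj (a := 5) (b := 1) (by norm_num) (by norm_num) (by linear_combination e2 + θ * h8)
      omega

lemma card_two (h : Ctx F p n k l m M α) {a b : ℕ} (ha : a < 8) (hb : b < 8) (hab : a ≠ b) :
    (univ.filter (fun x : F => x ^ (m * M) = (α ^ (m * M)) ^ a ∨
      x ^ (m * M) = (α ^ (m * M)) ^ b)).card = 2 * (m * M) := by
  rw [filter_or, card_union_of_disjoint, h.card_class, h.card_class, two_mul]
  rw [disjoint_filter]
  intro x _ e1 e2
  exact hab (h.θ_inj ha hb (e1.symm.trans e2))

lemma card_DD (h : Ctx F p n k l m M α) : (DD α (m * M)).card = 2 * (m * M) :=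
  h.card_two (by norm_num) (by norm_num) (by norm_num)

lemma sum_ff_sq (D : Finset F) (i g : F) :
    ∑ u ∈ D, ff l m i g u ^ 2 = D.card - ∑ u ∈ D, if zf l g u = 0 then (1 : ℤ) else 0 := by
  rw [eq_sub_iff_add_eq, ← sum_add_distrib]
  rw [sum_congr rfl (g := fun _ => (1 : ℤ))]
  · simp
  · intro u _
    rw [ff_sq]; split_ifs <;> rfl

/-- `g` on no line of `DD` -/
lemma Q_even (h : Ctx F p n k l m M α) {g : F} (hg : g ≠ 0) {j : ℕ} (hj : j < 8) (hj2 : j % 2 = 0)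
    (e : g ^ (m * M) = (α ^ (m * M)) ^ j) :
    (∑ u ∈ DD α (m * M), if zf l g u = 0 then (1 : ℤ) else 0) = 0 := by
  apply sum_eq_zero
  intro u hu
  rw [if_neg]
  intro hz
  have hu0 := h.DD_ne hu
  have ht := h.K_char (h.K_pow (div_ne_zero hu0 hg) ((h.zf_zero_iff hg).1 hz))
  have e2 : ∀ c, (u / g) ^ (m * M) = c → u ^ (m * M) = g ^ (m * M) * c := by
    rintro c rfl; rw [← mul_pow]; congr 1; field_simp
  rw [mem_DD] at hu
  have h16 : ∀ a b : ℕ, (α ^ (m * M)) ^ a = (α ^ (m * M)) ^ b → a % 8 = b % 8 := by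
    intro a b hab
    rw [pow_eq_pow_mod a h.θprim.pow_eq_one, pow_eq_pow_mod b h.θprim.pow_eq_one] at hab
    exact h.θ_inj (Nat.mod_lt _ (by norm_num)) (Nat.mod_lt _ (by norm_num)) hab
  rcases ht with ht | ht <;> have e3 := e2 _ ht.2 <;> rw [e] at e3 <;>
    rcases hu with hu | hu <;> rw [hu] at e3
  · rw [mul_one] at e3; have := h16 _ _ e3; omega
  · rw [mul_one] at e3; have := h16 _ _ e3; omega
  · rw [← pow_add] at e3; have := h16 _ _ e3; omega
  · rw [← pow_add] at e3; have := h16 _ _ e3; omega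

lemma Q_DD (h : Ctx F p n k l m M α) {g : F} (hg : g ∈ DD α (m * M)) :
    (∑ u ∈ DD α (m * M), if zf l g u = 0 then (1 : ℤ) else 0) = m := by
  have hm := h.mpos
  have hg0 := h.DD_ne hg
  have h0 : ∀ a ∈ Rt F m, a ≠ 0 := fun a ha => h.Rt_ne hm (mem_Rt.1 ha)
  have cH := h.card_Rt (r := m) (s := 8 * M) (by ring)
  have := dep_count (Rt F m) (DD α (m * M)) h0
    (fun a ha u => DD_smul (by rw [pow_mul, mem_Rt.1 ha, one_pow]) u) hg hg0 1
  rw [cH, mul_one] at this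
  rw [← this]
  apply sum_congr rfl
  intro u hu
  have : zf l g u = 0 ↔ u / g ∈ Rt F m :=
    ⟨fun hz => h.DD_dep hg hu hz, fun ht => (h.zf_zero_iff hg0).2 (h.Rt_pow (mem_Rt.1 ht))⟩
  simp only [this]

lemma Q_odd (h : Ctx F p n k l m M α) {g : F} {j : ℕ} (hj : j < 8) (hj2 : j % 2 = 1)
    (e : g ^ (m * M) = (α ^ (m * M)) ^ j) :
    (∑ u ∈ DD α (m * M), if zf l g u = 0 then (1 : ℤ) else 0) = m := by
  by_cases hg : g ∈ DD α (m * M)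
  · exact h.Q_DD hg
  · have hg' : -g ∈ DD α (m * M) := by
      rw [mem_DD] at hg ⊢
      rw [h.mModd.neg_pow]
      rw [e] at hg ⊢
      have h4 := h.θ4
      generalize α ^ (m * M) = θ at *
      interval_cases j
      · omega
      · right; linear_combination -θ * h4
      · omega
      · simp at hg
      · omega
      · simp at hg
      · omega
      · left; linear_combination - θ ^ 3 * h4
    rw [← h.Q_DD hg']
    apply sum_congr rfl
    intro u _
    simp only [h.neg_zf, neg_eq_zero]

lemma N_even (h : Ctx F p n k l m M α) {i : F} (hi : i ^ 2 = -1) {g : F} (hg : g ≠ 0) {j : ℕ} (hj : j < 8) (hj2 : j % 2 = 0)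
    (e : g ^ (m * M) = (α ^ (m * M)) ^ j) :
    4 * (m : ℤ) ^ 2 * NN (DD α (m * M)) g =
      4 * m ^ 2 * (M ^ 2 - M) + TT l m (m * M) α i g ^ 2 := by
  have := h.formulaD (DD α (m * M)) hi (fun u => h.DD_ne)
    (fun a ha u => DD_smul (by rw [pow_mul, mem_Rt.1 ha, one_pow]) u)
    (fun u hu v hv => h.DD_dep hu hv) hg
  rw [sum_ff_sq, h.Q_even hg hj hj2 e, h.card_DD] at this
  rw [this]
  unfold TT
  push_cast
  ring

lemma N_odd (h : Ctx F p n k l m M α) {i : F} (hi : i ^ 2 = -1) {g : F} (hg : g ≠ 0) {j : ℕ} (hj : j < 8) (hj2 : j % 2 = 1)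
    (e : g ^ (m * M) = (α ^ (m * M)) ^ j) :
    4 * (m : ℤ) ^ 2 * NN (DD α (m * M)) g =
      m ^ 2 * ((2 * M - 1) * (2 * M - 3) + 2 * (m - 1)) + TT l m (m * M) α i g ^ 2 := by
  have := h.formulaD (DD α (m * M)) hi (fun u => h.DD_ne)
    (fun a ha u => DD_smul (by rw [pow_mul, mem_Rt.1 ha, one_pow]) u)
    (fun u hu v hv => h.DD_dep hu hv) hg
  rw [sum_ff_sq, h.Q_odd hj hj2 e, h.card_DD] at this
  rw [this]
  unfold TT
  push_cast
  ring

/-! ### TT -/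

lemma TT_class (h : Ctx F p n k l m M α) {i : F} {g g' : F} (hg : g ≠ 0) (hg' : g' ≠ 0)
    (e : g ^ (m * M) = g' ^ (m * M)) : TT l m (m * M) α i g' = TT l m (m * M) α i g := by
  obtain ⟨c, rfl⟩ : ∃ c, g' = c * g := ⟨g' / g, by field_simp⟩
  have hc0 : c ≠ 0 := left_ne_zero_of_mul hg'
  have hc : c ^ (m * M) = 1 := by
    rw [mul_pow] at e
    exact mul_right_cancel₀ (pow_ne_zero _ hg) (e.symm.trans (one_mul _).symm)
  unfold TT
  rw [← sum_smul_inv (DD α (m * M)) hc0 (DD_smul hc)]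
  apply sum_congr rfl
  intro u _
  apply h.ff_congr
  have : zf l (c * g) (c * u) = c ^ (l + 1) * zf l g u := by unfold zf; ring
  rw [this, mul_pow, ← pow_mul]
  have : (l + 1) * m = (m * M) * 4 := by
    have := h.m_eq; have := h.l_eq
    have : l + 1 = 4 * M := by omega
    rw [this]; ring
  rw [this, pow_mul, hc, one_pow, one_mul]

lemma TT_neg (h : Ctx F p n k l m M α) {i : F} (hi : i ^ 2 = -1) (g : F) :
    TT l m (m * M) α i (-g) = - TT l m (m * M) α i g := by
  unfold TT
  rw [← sum_neg_distrib]
  exact sum_congr rfl (fun u _ => h.ff_neg_left hi g u)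

lemma pow_l_char (h : Ctx F p n k l m M α) {u : F} (hu : u ≠ 0) : (u ^ l) ^ (m * M) = (u ^ (m * M)) ^ 3 := by
  have : l * (m * M) = 8 * (m * M) * k + (m * M) * 3 := by rw [h.hl]; ring
  rw [← pow_mul, this, pow_add, pow_mul, h.pow_order hu, one_pow, one_mul, pow_mul]

lemma TT_frob (h : Ctx F p n k l m M α) {i : F} (g : F) :
    TT l m (m * M) α i (g ^ l) = TT l m (m * M) α i g := by
  unfold TT
  have h4 := h.θ4
  have h8 := h.θprim.pow_eq_one
  have mem : ∀ u ∈ DD α (m * M), -u ^ l ∈ DD α (m * M) := by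
    intro u hu
    have hu0 := h.DD_ne hu
    rw [mem_DD] at hu ⊢
    rw [h.mModd.neg_pow, h.pow_l_char hu0]
    generalize α ^ (m * M) = θ at *
    rcases hu with e | e <;> rw [e]
    · right; linear_combination - θ * h8 - θ * h4
    · left; linear_combination (- θ ^ 7) * h8 - θ ^ 3 * h4
  symm
  apply Finset.sum_nbij' (fun u => -u ^ l) (fun u => -u ^ l) mem mem
  · intro u _
    simp only [h.lodd.neg_pow, h.pow_ll, neg_neg]
  · intro u _
    simp only [h.lodd.neg_pow, h.pow_ll, neg_neg]
  · intro u _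
    apply h.ff_congr
    congr 1
    unfold zf
    rw [h.lodd.neg_pow, h.pow_ll, h.pow_ll]
    ring

lemma TT_val (h : Ctx F p n k l m M α) {i : F} (hi : i ^ 2 = -1) {g : F} (hg : g ≠ 0) {j : ℕ} (hj : j < 8)
    (e : g ^ (m * M) = (α ^ (m * M)) ^ j) :
    TT l m (m * M) α i g ^ 2 = if j % 2 = 1 then TT l m (m * M) α i α ^ 2 else
      if j % 4 = 0 then TT l m (m * M) α i 1 ^ 2 else 0 := by
  have h4 := h.θ4
  have h8 := h.θprim.pow_eq_one
  have hα := h.α_ne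
  have cl : ∀ {g g' : F}, g ≠ 0 → g' ≠ 0 → g ^ (m * M) = g' ^ (m * M) →
      TT l m (m * M) α i g' = TT l m (m * M) α i g := fun a b c => h.TT_class a b c
  have ng := h.TT_neg hi
  have fr : ∀ g, TT l m (m * M) α i (g ^ l) = TT l m (m * M) α i g := fun g => h.TT_frob g
  have npow : ∀ x : F, (-x) ^ (m * M) = - x ^ (m * M) := fun x => h.mModd.neg_pow x
  have e1 : (α ^ l) ^ (m * M) = (α ^ (m * M)) ^ 3 := h.pow_l_char hα
  have eg : (g ^ l) ^ (m * M) = (g ^ (m * M)) ^ 3 := h.pow_l_char hg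
  have hgl := pow_ne_zero l hg
  have hαl := pow_ne_zero l hα
  have hk1 : α ^ (m * M) = (α ^ (m * M)) ^ 1 := (pow_one _).symm
  generalize hθ : α ^ (m * M) = θ at *
  interval_cases j
  · simp; rw [cl (g := 1) (g' := g) one_ne_zero hg (by rw [e]; simp)]
  · simp; rw [cl (g := α) (g' := g) hα hg (by rw [e, hθ]; simp)]
  · simp
    have := cl (g := g ^ l) (g' := -g) hgl (neg_ne_zero.2 hg)
      (by rw [npow, eg, e]; linear_combination θ ^ 2 * h4)
    rw [ng, fr] at this
    omega
  · simp
    rw [cl (g := α ^ l) (g' := g) hαl hg (by rw [e, e1]), fr]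
  · simp
    rw [cl (g := -1) (g' := g) (neg_ne_zero.2 one_ne_zero) hg
      (by rw [e, npow, one_pow]; linear_combination -h4), ng, neg_sq]
  · simp
    rw [cl (g := -α) (g' := g) (neg_ne_zero.2 hα) hg
      (by rw [e, npow, hθ]; linear_combination -θ * h4), ng, neg_sq]
  · simp
    have := cl (g := g ^ l) (g' := -g) hgl (neg_ne_zero.2 hg)
      (by rw [npow, eg, e]; linear_combination θ ^ 6 * (θ ^ 8 + 1 - θ ^ 4 + 0) * h4)
    rw [ng, fr] at this
    omega
  · simp
    rw [cl (g := - α ^ l) (g' := g) (neg_ne_zero.2 hαl) hg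
      (by rw [e, npow, e1]; linear_combination -θ ^ 3 * h4), ng, fr, neg_sq]

end Ctx
end Classes

section Final

set_option linter.unusedSectionVars false

variable {F : Type*} [Field F] [Fintype F] [DecidableEq F] {p n k l m M : ℕ} {α : F}

namespace Ctx


lemma sum_pow_all (h : Ctx F p n k l m M α) {e : ℕ} (he : 0 < e) :
    ∑ g : F, g ^ e = if 8 * (m * M) ∣ e then -1 else 0 := by
  split_ifs with hd
  · obtain ⟨c, rfl⟩ := hd
    have : ∀ g : F, g ^ (8 * (m * M) * c) = 1 - if g = 0 then 1 else 0 := by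
      intro g
      by_cases hg : g = 0
      · rw [hg, zero_pow he.ne']; simp
      · rw [pow_mul, h.pow_order hg]; simp [hg]
    simp only [this, sum_sub_distrib, sum_ite_eq', mem_univ, if_true]
    have h0 := FiniteField.cast_card_eq_zero F
    simp [h0]
  · have e1 := sum_smul_inv (univ : Finset F) h.α_ne (by simp) (fun g => g ^ e)
    simp only [mul_pow, ← mul_sum] at e1
    have hne : α ^ e ≠ 1 := fun e => hd ((h.prim.pow_eq_one_iff_dvd _).1 e)
    have : (α ^ e - 1) * ∑ g : F, g ^ e = 0 := by linear_combination e1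
    rcases mul_eq_zero.1 this with e | e
    · exact absurd (sub_eq_zero.1 e) hne
    · exact e

lemma cast_mM_ne (h : Ctx F p n k l m M α) : ((m * M : ℕ) : F) ≠ 0 := by
  intro e
  have h0 := FiniteField.cast_card_eq_zero F
  rw [h.card] at h0
  have h1 : l ^ 2 = 8 * (m * M) + 1 := by
    have := h.card_sub
    have : 0 < l ^ 2 := pow_pos h.lpos 2
    omega
  rw [h1] at h0
  push_cast at h0 e
  rw [e] at h0
  simp at h0

lemma sum_cubes (h : Ctx F p n k l m M α) : ∑ u ∈ DD α (m * M), (u ^ (m * M)) ^ 3 ≠ 0 := by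
  have e : ∑ u ∈ DD α (m * M), (u ^ (m * M)) ^ 3 =
      ((m * M : ℕ) : F) * ((α ^ (m * M)) ^ 3) ^ 3 + ((m * M : ℕ) : F) * ((α ^ (m * M)) ^ 5) ^ 3 := by
    unfold DD
    rw [filter_or, sum_union]
    · congr 1
      · rw [sum_congr rfl (g := fun _ => ((α ^ (m * M)) ^ 3) ^ 3)]
        · rw [sum_const, h.card_class, nsmul_eq_mul]
        · intro u hu; rw [(mem_filter.1 hu).2]
      · rw [sum_congr rfl (g := fun _ => ((α ^ (m * M)) ^ 5) ^ 3)]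
        · rw [sum_const, h.card_class, nsmul_eq_mul]
        · intro u hu; rw [(mem_filter.1 hu).2]
    · rw [disjoint_filter]
      intro x _ e1 e2
      have := h.θ_inj (by norm_num) (by norm_num) (e1.symm.trans e2)
      omega
  rw [e, ← mul_add]
  apply mul_ne_zero h.cast_mM_ne
  intro e
  have h4 := h.θ4
  have hθ := pow_ne_zero (m * M) h.α_ne
  have h2 := h.two_ne
  generalize α ^ (m * M) = θ at *
  have e1 : θ ^ 9 * (1 + θ ^ 6) = 0 := by linear_combination e
  rcases mul_eq_zero.1 e1 with e | e
  · exact pow_ne_zero _ hθ e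
  · apply h2
    have : θ ^ 2 = 1 := by linear_combination θ ^ 2 * h4 - e
    linear_combination h4 - (θ ^ 2 + 1) * this

lemma not_all_dvd (h : Ctx F p n k l m M α) (hC : ¬ p ∣ m.choose k) {i : F} (hi : i ^ 2 = -1) :
    ¬ ∀ g : F, (p : ℤ) ∣ TT l m (m * M) α i g := by
  intro hall
  have hchar := h.hchar
  have hm := h.mpos
  have hkm : k ≤ m := by have := h.hm; omega
  have z0 : ∀ g : F, ∑ u ∈ DD α (m * M), zf l g u ^ m = 0 := by
    intro g
    have : ((TT l m (m * M) α i g : ℤ) : F) = 0 := (CharP.intCast_eq_zero_iff F p _).2 (hall g)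
    unfold TT at this
    rw [sum_congr rfl (fun u _ => (h.ff_cast hi g u).symm), ← sum_mul, ← Int.cast_sum, this,
      zero_mul]
  have tot : ∑ g : F, g ^ (m * (14 * k + 7)) * ∑ u ∈ DD α (m * M), zf l g u ^ m = 0 := by
    simp [z0]
  have expand : ∀ g u : F, g ^ (m * (14 * k + 7)) * zf l g u ^ m =
      ∑ j ∈ range (m + 1), (m.choose j : F) * (-1) ^ (m - j) * u ^ (j + l * (m - j)) *
        g ^ (m * (14 * k + 8 + 2 * j)) := by
    intro g u
    unfold zf
    rw [sub_eq_add_neg, _root_.add_pow, mul_sum]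
    apply sum_congr rfl
    intro j hj
    have hj' : j ≤ m := by rw [mem_range] at hj; omega
    rw [neg_pow, mul_pow, mul_pow, ← pow_mul, ← pow_mul, pow_add]
    have : m * (14 * k + 8 + 2 * j) = m * (14 * k + 7) + l * j + (m - j) := by
      obtain ⟨d, rfl⟩ := Nat.exists_eq_add_of_le hj'
      rw [h.l_eq, Nat.add_sub_cancel_left]; ring
    rw [this, pow_add, pow_add]
    ring
  have tot2 : ∑ u ∈ DD α (m * M), ∑ j ∈ range (m + 1),
      (m.choose j : F) * (-1) ^ (m - j) * u ^ (j + l * (m - j)) *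
        (∑ g : F, g ^ (m * (14 * k + 8 + 2 * j))) = 0 := by
    rw [← tot]
    simp only [mul_sum]
    symm
    rw [sum_comm]
    apply sum_congr rfl; intro u _
    simp only [expand]
    rw [sum_comm]
  have sg : ∀ j ∈ range (m + 1), ∑ g : F, g ^ (m * (14 * k + 8 + 2 * j)) =
      if j = k then -1 else 0 := by
    intro j hj
    rw [mem_range] at hj
    rw [h.sum_pow_all (Nat.mul_pos hm (by omega))]
    have : 8 * (m * M) ∣ m * (14 * k + 8 + 2 * j) ↔ j = k := by
      have e : 8 * (m * M) = m * (16 * k + 8) := by rw [h.hM]; ring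
      rw [e, Nat.mul_dvd_mul_iff_left hm]
      constructor
      · rintro ⟨c, hc⟩
        have hmk := h.hm
        have : c = 1 := by
          have h1 : 0 < c := by
            rcases Nat.eq_zero_or_pos c with e | e
            · rw [e, mul_zero] at hc; omega
            · exact e
          have h2 : c < 2 := by
            by_contra hcc
            have : (16 * k + 8) * 2 ≤ (16 * k + 8) * c := Nat.mul_le_mul_left _ (by omega)
            omega
          omega
        subst this
        omega
      · rintro rfl
        exact ⟨1, by ring⟩
    simp only [this]
  have tot3 : ∑ u ∈ DD α (m * M), (m.choose k : F) * (-1) ^ (m - k) * (u ^ (m * M)) ^ 3 * (-1)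
      = 0 := by
    rw [← tot2]
    apply sum_congr rfl; intro u _
    rw [sum_eq_single_of_mem k (mem_range.2 (by omega))]
    · rw [sg k (mem_range.2 (by omega)), if_pos rfl, ← pow_mul]
      congr 3
      have : m - k = 3 * k + 1 := by have := h.hm; omega
      rw [this, h.hl, h.hm, h.hM]; ring
    · intro j hj hjk
      rw [sg j hj, if_neg hjk, mul_zero]
  rw [← sum_mul, ← mul_sum] at tot3
  have hCF : (m.choose k : F) ≠ 0 := by
    intro e
    exact hC ((CharP.cast_eq_zero_iff F p _).1 e)
  have : (m.choose k : F) * (-1) ^ (m - k) * (∑ u ∈ DD α (m * M), (u ^ (m * M)) ^ 3) * (-1) ≠ 0 :=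
    mul_ne_zero (mul_ne_zero (mul_ne_zero hCF (pow_ne_zero _ (neg_ne_zero.2 one_ne_zero)))
      h.sum_cubes) (neg_ne_zero.2 one_ne_zero)
  exact this tot3

lemma sum_classes (h : Ctx F p n k l m M α) (φ : F → ℤ) (v : ℕ → ℤ)
    (hv : ∀ j < 8, ∀ g : F, g ^ (m * M) = (α ^ (m * M)) ^ j → φ g = v j) :
    ∑ g ∈ univ.erase (0 : F), φ g = (m * M : ℕ) * ∑ j ∈ range 8, v j := by
  have e : univ.erase (0 : F) = (range 8).biUnion
      (fun j => univ.filter (fun x : F => x ^ (m * M) = (α ^ (m * M)) ^ j)) := by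
    ext x
    simp only [mem_erase, mem_univ, and_true, mem_biUnion, mem_range, mem_filter, true_and]
    constructor
    · intro hx; exact h.classes hx
    · rintro ⟨j, _, hj⟩ rfl
      rw [zero_pow h.mMpos.ne'] at hj
      exact pow_ne_zero _ (pow_ne_zero _ h.α_ne) hj.symm
  rw [e, sum_biUnion, mul_sum]
  · apply sum_congr rfl
    intro j hj
    rw [sum_congr rfl (g := fun _ => v j)]
    · rw [sum_const, h.card_class, nsmul_eq_mul]
    · intro g hg
      exact hv j (mem_range.1 hj) g (mem_filter.1 hg).2
  · intro a ha b hb hab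
    rw [Function.onFun, disjoint_filter]
    intro x _ e1 e2
    exact hab (h.θ_inj (by simpa using ha) (by simpa using hb) (e1.symm.trans e2))

lemma class_ne (h : Ctx F p n k l m M α) {g : F} {j : ℕ} (e : g ^ (m * M) = (α ^ (m * M)) ^ j) : g ≠ 0 := by
  rintro rfl
  rw [zero_pow h.mMpos.ne'] at e
  exact pow_ne_zero _ (pow_ne_zero _ h.α_ne) e.symm

lemma moment (h : Ctx F p n k l m M α) {i : F} (hi : i ^ 2 = -1) :
    TT l m (m * M) α i 1 ^ 2 + 2 * TT l m (m * M) α i α ^ 2 = 2 * l * (m : ℤ) ^ 2 := by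
  have h1 := h.sum_classes (fun g => 4 * (m : ℤ) ^ 2 * NN (DD α (m * M)) g)
    (fun j => if j % 2 = 1 then
        m ^ 2 * ((2 * M - 1) * (2 * M - 3) + 2 * (m - 1)) + TT l m (m * M) α i α ^ 2
      else 4 * m ^ 2 * (M ^ 2 - M) + if j % 4 = 0 then TT l m (m * M) α i 1 ^ 2 else 0) (by
      intro j hj g e
      have hg := h.class_ne e
      have hT := h.TT_val hi hg hj e
      by_cases hj2 : j % 2 = 1
      · simp only [hj2, if_true] at hT ⊢
        rw [h.N_odd hi hg hj hj2 e, hT]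
      · simp only [hj2, if_false] at hT ⊢
        rw [h.N_even hi hg hj (by omega) e, hT])
  rw [← mul_sum, sum_NN, h.card_DD] at h1
  simp only [sum_range_succ, sum_range_zero] at h1
  norm_num at h1
  have hm : (m : ℤ) * M ≠ 0 := by exact_mod_cast h.mMpos.ne'
  have hmM : (m : ℤ) = 2 * M - 1 := by have := h.m_eq; omega
  have hl : (l : ℤ) = 4 * M - 1 := by have := h.l_eq; omega
  apply mul_left_cancel₀ hm
  apply mul_left_cancel₀ (two_ne_zero (α := ℤ))
  rw [hl]
  rw [hmM] at h1 ⊢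
  linear_combination -h1

end Ctx
end Final

section Final2

set_option linter.unusedSectionVars false

variable {F : Type*} [Field F] [Fintype F] [DecidableEq F] {p n k l m M : ℕ} {α : F}

lemma intDiff_eq (D A : Finset F) (lam mu : ℕ) (h0 : (0 : F) ∉ A)
    (hN : ∀ g : F, g ≠ 0 → NN D g = if g ∈ A then (lam : ℤ) else mu) :
    intDiff D = lam • (A.erase 0).val + mu • (Gstar F \ A).val := by
  ext g
  rw [Multiset.count_add, Multiset.count_nsmul, Multiset.count_nsmul,
    Multiset.count_eq_of_nodup (A.erase 0).nodup, Multiset.count_eq_of_nodup (Gstar F \ A).nodup]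
  have hc : Multiset.count g (intDiff D) =
      (((D ×ˢ D).filter (fun p => p.1 ≠ p.2)).filter (fun p => g = p.1 - p.2)).card := by
    unfold intDiff
    rw [Multiset.count_map]
    rfl
  rw [hc]
  simp only [mem_val, Gstar, mem_sdiff, mem_erase, mem_univ, and_true]
  by_cases hg : g = 0
  · subst hg
    simp only [ne_eq, not_true_eq_false, false_and, if_false, mul_zero, add_zero, card_eq_zero]
    rw [filter_filter, filter_eq_empty_iff]
    rintro x _ ⟨h1, h2⟩
    exact h1 (sub_eq_zero.1 h2.symm)
  · have e : ((((D ×ˢ D).filter (fun p => p.1 ≠ p.2)).filter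
        (fun p => g = p.1 - p.2)).card : ℤ) = NN D g := by
      unfold NN
      rw [← sum_product', filter_filter, card_filter]
      push_cast
      apply sum_congr rfl
      rintro ⟨x, y⟩ _
      have : (x ≠ y ∧ g = x - y) ↔ x - y = g := by
        constructor
        · rintro ⟨_, e⟩; exact e.symm
        · intro e
          refine ⟨?_, e.symm⟩
          rintro rfl
          exact hg (by rw [← e, sub_self])
      simp only [this]
    rw [hN g hg] at e
    by_cases hA : g ∈ A
    · simp [hA, hg] at e ⊢; exact e
    · simp [hA, hg] at e ⊢; exact e

namespace Ctx


lemma mem_cyc (h : Ctx F p n k l m M α) {e i r : ℕ} (hr : e * r = 8 * (m * M)) (he : i < e) {x : F} :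
    x ∈ cycClass α e i ↔ x ^ r = (α ^ r) ^ i := by
  have hp := h.mMpos
  have hr0 : r ≠ 0 := by rintro rfl; omega
  unfold cycClass
  simp only [mem_image, mem_range]
  constructor
  · rintro ⟨j, _, rfl⟩
    rw [← pow_mul, ← pow_mul, add_mul, pow_add]
    have : e * j * r = 8 * (m * M) * j := by rw [← hr]; ring
    rw [this, pow_mul, h.prim.pow_eq_one, one_pow, one_mul, mul_comm]
  · intro hx
    have hx0 : x ≠ 0 := by
      rintro rfl
      rw [zero_pow hr0] at hx
      exact pow_ne_zero _ (pow_ne_zero _ h.α_ne) hx.symm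
    obtain ⟨s, hs⟩ := h.gen x hx0
    rw [pow_eq_pow_mod s h.prim.pow_eq_one] at hs
    have hlt : s % (8 * (m * M)) < 8 * (m * M) := Nat.mod_lt _ (by omega)
    generalize s % (8 * (m * M)) = t at *
    have hprim : IsPrimitiveRoot (α ^ r) e := h.prim.pow (by omega) (by rw [← hr]; ring)
    rw [← hs, ← pow_mul, mul_comm, pow_mul, pow_eq_pow_mod t hprim.pow_eq_one] at hx
    have := hprim.pow_inj (Nat.mod_lt _ (by omega)) he hx
    refine ⟨t / e, ?_, ?_⟩
    · have : Fintype.card F = 8 * (m * M) + 1 := by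
        have := h.card_sub
        have : 0 < l ^ 2 := pow_pos h.lpos 2
        rw [h.card]; omega
      rw [this]
      have := Nat.div_le_self t e
      omega
    · rw [← hs]
      congr 1
      have := Nat.div_add_mod t e
      omega

lemma cyc_D (h : Ctx F p n k l m M α) : cycClass α 8 3 ∪ cycClass α 8 5 = DD α (m * M) := by
  ext x
  rw [mem_union, h.mem_cyc (r := m * M) rfl (by norm_num),
    h.mem_cyc (r := m * M) rfl (by norm_num), mem_DD]

lemma mem_A (h : Ctx F p n k l m M α) {x : F} : x ∈ cycClass α 4 0 ↔ x ^ (2 * (m * M)) = 1 := by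
  rw [h.mem_cyc (r := 2 * (m * M)) (by ring) (by norm_num), pow_zero]

lemma card_A (h : Ctx F p n k l m M α) : (cycClass α 4 0).card = 2 * (m * M) := by
  rw [← h.card_Rt (r := 2 * (m * M)) (s := 4) (by ring)]
  congr 1
  ext x
  rw [h.mem_A, mem_Rt]

lemma mem_A_class (h : Ctx F p n k l m M α) {g : F} {j : ℕ} (hj : j < 8) (e : g ^ (m * M) = (α ^ (m * M)) ^ j) :
    g ∈ cycClass α 4 0 ↔ j % 4 = 0 := by
  rw [h.mem_A, mul_comm 2, pow_mul, e, ← pow_mul, h.θprim.pow_eq_one_iff_dvd]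
  omega

lemma A_ne (h : Ctx F p n k l m M α) {g : F} (hg : g ∈ cycClass α 4 0) : g ≠ 0 := by
  have := h.mMpos
  exact h.Rt_ne (by omega) (h.mem_A.1 hg)

lemma N_A (h : Ctx F p n k l m M α) {g : F} (hg : g ≠ 0) :
    NN (cycClass α 4 0) g = if g ∈ cycClass α 4 0 then (M : ℤ) * (M - 1) + m else M * (M - 1) := by
  have hm := h.mpos
  have hinv : ∀ a ∈ Rt F (2 * m), ∀ u, a * u ∈ cycClass α 4 0 ↔ u ∈ cycClass α 4 0 := by
    intro a ha u
    rw [h.mem_A, h.mem_A, mul_pow, ← mul_assoc, pow_mul a, mem_Rt.1 ha, one_pow, one_mul]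
  have hf := h.formulaA (cycClass α 4 0) (i := 1) (fun u hu => h.A_ne hu) hinv hg
  have h0 : ∀ a ∈ Rt F (2 * m), a ≠ 0 := fun a ha => h.Rt_ne (by omega) (mem_Rt.1 ha)
  rw [sum_ff_sq, h.card_A] at hf
  have hmM : (m : ℤ) = 2 * M - 1 := by have := h.m_eq; omega
  have hm0 : 4 * (m : ℤ) ^ 2 ≠ 0 := by positivity
  have hiff : ∀ u ∈ cycClass α 4 0, (zf l g u = 0 ↔ u / g ∈ Rt F (2 * m)) := by
    intro u hu
    rw [h.zf_zero_iff hg, mem_Rt]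
    exact ⟨fun e => h.K_pow (div_ne_zero (h.A_ne hu) hg) e, fun e => h.Rt2_pow e⟩
  have hsum : (∑ u ∈ cycClass α 4 0, if zf l g u = 0 then (1 : ℤ) else 0) =
      ∑ u ∈ cycClass α 4 0, if u / g ∈ Rt F (2 * m) then (1 : ℤ) else 0 := by
    apply sum_congr rfl; intro u hu
    simp only [hiff u hu]
  rw [hsum] at hf
  by_cases hA : g ∈ cycClass α 4 0
  · rw [if_pos hA]
    rw [dep_count (Rt F (2 * m)) _ h0 hinv hA hg 1,
      h.card_Rt (r := 2 * m) (s := 4 * M) (by ring)] at hf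
    push_cast at hf
    apply mul_left_cancel₀ hm0
    rw [hf, hmM]
    ring
  · rw [if_neg hA]
    rw [sum_eq_zero] at hf
    · push_cast at hf
      apply mul_left_cancel₀ hm0
      rw [hf]
      ring
    · intro u hu
      rw [if_neg]
      intro ht
      apply hA
      have e : u = u / g * g := by field_simp
      rw [e] at hu
      exact (hinv _ ht g).1 hu

lemma N_D (h : Ctx F p n k l m M α) (hn : n ≠ 0) (hp2 : p ≠ 2) (hC : ¬ p ∣ m.choose k) (c : ℤ) (hc : c ^ 2 = 2 * ((l : ℤ) - 1))
    {g : F} (hg : g ≠ 0) :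
    NN (DD α (m * M)) g =
      if g ∈ cycClass α 4 0 then (M : ℤ) * (M - 1) + m else M * (M - 1) := by
  obtain ⟨i, hi⟩ : ∃ i : F, i ^ 2 = -1 :=
    ⟨(α ^ (m * M)) ^ 2, by rw [← pow_mul]; exact h.θ4⟩
  have hm0 : (m : ℤ) ≠ 0 := by exact_mod_cast h.mpos.ne'
  have hmom := h.moment hi
  have hmM : (m : ℤ) = 2 * M - 1 := by have := h.m_eq; omega
  have hl : (l : ℤ) = 4 * M - 1 := by have := h.l_eq; omega
  have N1 := h.N_odd hi h.α_ne (j := 1) (by norm_num) (by norm_num) (pow_one _).symm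
  have N0 := h.N_even hi (g := 1) one_ne_zero (j := 0) (by norm_num) (by norm_num) (by simp)
  have hd1 : (m : ℤ) ∣ TT l m (m * M) α i α := by
    rw [← Int.pow_dvd_pow_iff (two_ne_zero)]
    exact ⟨4 * NN (DD α (m * M)) α - ((2 * M - 1) * (2 * M - 3) + 2 * (m - 1)),
      by linear_combination -N1⟩
  have hd0 : (m : ℤ) ∣ TT l m (m * M) α i 1 := by
    rw [← Int.pow_dvd_pow_iff (two_ne_zero)]
    exact ⟨4 * NN (DD α (m * M)) 1 - 4 * (M ^ 2 - M), by linear_combination -N0⟩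
  obtain ⟨s1, hs1⟩ := hd1
  obtain ⟨s0, hs0⟩ := hd0
  have hs : s0 ^ 2 + 2 * s1 ^ 2 = 2 * l := by
    apply mul_left_cancel₀ (pow_ne_zero 2 hm0)
    rw [hs0, hs1] at hmom
    linear_combination hmom
  obtain ⟨y, hy⟩ : ∃ y, s0 = 2 * y := by
    have : (2 : ℤ) ∣ s0 ^ 2 := ⟨l - s1 ^ 2, by linear_combination hs⟩
    exact Int.prime_two.dvd_of_dvd_pow this
  obtain ⟨w, hw⟩ : ∃ w, c = 2 * w := by
    have : (2 : ℤ) ∣ c ^ 2 := ⟨_, hc⟩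
    exact Int.prime_two.dvd_of_dvd_pow this
  have h1 : 1 + 2 * w ^ 2 = (l : ℤ) := by
    rw [hw] at hc
    have : 4 * w ^ 2 = 2 * ((l : ℤ) - 1) := by linear_combination hc
    omega
  have h2 : s1 ^ 2 + 2 * y ^ 2 = (l : ℤ) := by
    rw [hy] at hs
    have : 4 * y ^ 2 + 2 * s1 ^ 2 = 2 * (l : ℤ) := by linear_combination hs
    omega
  have hpp : Prime (p : ℤ) := Nat.prime_iff_prime_int.1 h.hp
  have hps : ¬ (p : ℤ) ∣ s1 := by
    intro hd
    apply h.not_all_dvd hC hi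
    intro g
    by_cases hg : g = 0
    · have : TT l m (m * M) α i g = 0 := by
        unfold TT
        apply sum_eq_zero; intro u _
        unfold ff
        rw [if_pos]
        unfold zf
        rw [hg, zero_pow h.lpos.ne']; ring
      rw [this]; exact dvd_zero _
    · obtain ⟨j, hj, e⟩ := h.classes hg
      apply hpp.dvd_of_dvd_pow (n := 2)
      rw [h.TT_val hi hg hj e]
      have d1 : (p : ℤ) ∣ TT l m (m * M) α i α ^ 2 := by
        rw [hs1]; exact dvd_pow (Dvd.dvd.mul_left hd _) two_ne_zero
      have dl : (p : ℤ) ∣ l := by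
        rw [h.hln]; push_cast; exact dvd_pow_self _ hn
      have d0 : (p : ℤ) ∣ TT l m (m * M) α i 1 ^ 2 := by
        have : TT l m (m * M) α i 1 ^ 2 =
          l * (2 * (m : ℤ) ^ 2) - 2 * TT l m (m * M) α i α ^ 2 := by linear_combination hmom
        rw [this]
        exact dvd_sub (Dvd.dvd.mul_right dl _) (Dvd.dvd.mul_left d1 _)
      split_ifs
      · exact d1
      · exact d0
      · exact dvd_zero _
  have hs1' := aux_unique p n h.hp hp2 l (by rw [h.hln]; push_cast; rfl) hn
    (by exact_mod_cast h.lpos) w s1 y h1 h2 hps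
  obtain ⟨j, hj, e⟩ := h.classes hg
  have hT := h.TT_val hi hg hj e
  have hm4 : 4 * (m : ℤ) ^ 2 ≠ 0 := by positivity
  apply mul_left_cancel₀ hm4
  simp only [h.mem_A_class hj e]
  by_cases hj2 : j % 2 = 1
  · have hj4 : ¬ j % 4 = 0 := by omega
    rw [if_neg hj4, h.N_odd hi hg hj hj2 e, hT, if_pos hj2, hs1, mul_pow, hs1', hmM]
    ring
  · rw [h.N_even hi hg hj (by omega) e, hT, if_neg hj2]
    by_cases hj4 : j % 4 = 0
    · rw [if_pos hj4, if_pos hj4, hs0]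
      rw [hs1', hl] at hs
      rw [hmM]
      linear_combination (2 * (M : ℤ) - 1) ^ 2 * hs
    · rw [if_neg hj4, if_neg hj4]
      ring

end Ctx
end Final2


/-- Let `ℓ ≡ 3 (mod 8)` be a prime power of the form `ℓ = c²/2 + 1`
(i.e. `c² = 2(ℓ - 1)`) for some integer `c`, and let `q = ℓ²`.  Then
`D = C_3^8 ∪ C_5^8` is a skew PDS in `F_q` corresponding to the
`(q,(q-1)/4,(q-11+6ℓ)/16,(q-3-2ℓ)/16)`-PDS `C_0^4`. -/
theorem stmt_5 {F : Type*} [Field F] [Fintype F] [DecidableEq F]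
    (l : ℕ) (hlpp : IsPrimePow l) (hl8 : l % 8 = 3)
    (c : ℤ) (hc : c ^ 2 = 2 * ((l : ℤ) - 1))
    (q : ℕ) (hq : Fintype.card F = q) (hql : q = l ^ 2)
    (α : F) (hα : IsPrimitiveElt α) :
    ∃ lam mu : ℕ,
      16 * (lam : ℤ) = (q : ℤ) - 11 + 6 * l ∧
      16 * (mu : ℤ) = (q : ℤ) - 3 - 2 * l ∧
      IsSkewPDS (cycClass α 8 3 ∪ cycClass α 8 5) (cycClass α 4 0)
        q ((q - 1) / 4) lam mu := by
  obtain ⟨p, n, hp, hn, hpn⟩ := hlpp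
  rw [← Nat.prime_iff] at hp
  obtain ⟨k, hk⟩ : ∃ k, l = 8 * k + 3 := ⟨l / 8, by omega⟩
  -- residues
  have hp8 : p % 8 = 3 ∧ n % 2 = 1 := by
    have hsq : ∀ t, (p ^ 2) ^ t % 8 = 1 ∨ p % 2 = 0 := by
      intro t
      rcases Nat.mod_two_eq_zero_or_one p with e | e
      · exact Or.inr e
      · left
        have : p ^ 2 % 8 = 1 := by
          have : p % 8 = 1 ∨ p % 8 = 3 ∨ p % 8 = 5 ∨ p % 8 = 7 := by omega
          rw [Nat.pow_mod]
          rcases this with e | e | e | e <;> rw [e]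
        rw [Nat.pow_mod, this]; simp
    have hodd : p % 2 ≠ 0 := by
      intro e
      have : 2 ∣ l := by
        rw [← hpn]; exact dvd_pow (Nat.dvd_of_mod_eq_zero e) hn.ne'
      omega
    have hd := Nat.div_add_mod n 2
    rcases Nat.mod_two_eq_zero_or_one n with e | e
    · exfalso
      rw [e, add_zero] at hd
      rw [← hpn, ← hd, pow_mul] at hl8
      rcases hsq (n / 2) with h | h <;> omega
    · refine ⟨?_, e⟩
      rw [e] at hd
      rw [← hpn, ← hd, pow_succ, pow_mul, Nat.mul_mod] at hl8
      rcases hsq (n / 2) with h | h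
      · rw [h] at hl8; omega
      · omega
  have hC : ¬ p ∣ (4 * k + 1).choose k := by
    apply aux_choose p hp (p / 8) (by omega) (n / 2)
    have : 2 * (n / 2) + 1 = n := by omega
    rw [this, hpn, hk]
  have hchar : CharP F p := by
    obtain ⟨p', hp', n', hpr, hcard⟩ := FiniteField.card' F
    have : p' = p := by
      have hd : p' ∣ p ^ (n * 2) := by
        rw [pow_mul, hpn, ← hql, ← hq, hcard]
        exact dvd_pow_self _ n'.pos.ne'
      exact (Nat.prime_dvd_prime_iff_eq hpr hp).1 (hpr.dvd_of_dvd_pow hd)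
    rw [← this]; exact hp'
  have hcs : l ^ 2 = 8 * ((4 * k + 1) * (2 * k + 1)) + 1 := by rw [hk]; ring
  have hα0 : α ≠ 0 := by
    rintro rfl
    have key : ∀ x : F, x = 0 ∨ x = 1 := by
      intro x
      by_cases hx : x = 0
      · exact Or.inl hx
      · obtain ⟨r, hr⟩ := hα x hx
        right
        rcases Nat.eq_zero_or_pos r with e | e
        · rw [← hr, e, pow_zero]
        · rw [zero_pow e.ne'] at hr
          exact absurd hr.symm hx
    have : Fintype.card F ≤ 2 := by
      have : (univ : Finset F) ⊆ {0, 1} := by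
        intro x _
        simpa using key x
      exact (card_le_card this).trans card_le_two
    rw [hq, hql, hcs] at this
    have : 0 < (4 * k + 1) * (2 * k + 1) := by positivity
    omega
  have prim : IsPrimitiveRoot α (8 * ((4 * k + 1) * (2 * k + 1))) := by
    have e := orderOf_eq_card_of_forall_mem_powers (g := Units.mk0 α hα0) (by
      intro x
      obtain ⟨r, hr⟩ := hα x x.ne_zero
      exact ⟨r, Units.ext (by simpa using hr)⟩)
    have : 8 * ((4 * k + 1) * (2 * k + 1)) = orderOf α := by
      rw [← orderOf_units, Units.val_mk0] at e
      rw [e, Nat.card_eq_fintype_card, Fintype.card_units, hq, hql, hcs]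
      rfl
    rw [this]
    exact IsPrimitiveRoot.orderOf α
  have h : Ctx F p n k l (4 * k + 1) (2 * k + 1) α :=
    ⟨hk, rfl, rfl, hp, hpn.symm, hchar, by rw [hq, hql], prim, hα⟩
  refine ⟨(2 * k + 1) * (2 * k) + (4 * k + 1), (2 * k + 1) * (2 * k), ?_, ?_, ?_⟩
  · rw [hql, hk]; push_cast; ring
  · rw [hql, hk]; push_cast; ring
  · have h0 : (0 : F) ∉ cycClass α 4 0 := fun e => h.A_ne e rfl
    have hk4 : (q - 1) / 4 = 2 * ((4 * k + 1) * (2 * k + 1)) := by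
      rw [hql, hcs]; omega
    refine ⟨⟨hq, ?_, ?_⟩, ?_, ?_⟩
    · rw [hk4, h.card_A]
    · apply intDiff_eq _ _ _ _ h0
      intro g hg
      rw [h.N_A hg]
      push_cast
      simp
    · rw [hk4, h.cyc_D, h.card_DD]
    · apply intDiff_eq _ _ _ _ h0
      intro g hg
      rw [h.cyc_D, h.N_D hn.ne' (by omega) hC c hc hg]
      push_cast
      simp
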